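/- If f(x) = Σ_{i=0}^∞ e^{-λ_i} x^i with positive coefficients satisfies ∫_0^∞ f(sx)/f(x) dx = 1/(1-s) - β for all s ∈ [0,1), β ∈ [0,1), then lim_{x→∞} u(x)/x = 1, where u(x) = x f'(x)/f(x). -/

import Mathlib

/-!
Write `a n = exp (-lam n)` and `p n x = a n * x ^ n / f x`, a probability distribution in `n` for
each `x`, with mean `u x`. Comparing power series in `s`, the balanced equation says
`∫ p n = 1` for `n ≥ 1` and `∫ p 0 = 1 - β`; hence the distribution function
`S K x = ∑_{n ≤ K} p n x` satisfies `∫ S K = K + 1 - β`.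

One computes `-x * (S K)' x = u x * S K x - ∑_{n ≤ K} n * p n x =: F x`, so that
`G x = ∫_0^x S K - x * S K x` is a primitive of `F` with `0 ≤ G ≤ K + 1`. Since `u` is increasing,
* `F x ≥ (u Y - K) * S K x` for `x ≥ Y`, and integrating over `[Y, ∞)` gives
  `(u Y - K) * (K - Y) ≤ K + 1`;
* `F x ≥ (K + 1 - u Y) * (1 - S K x)` for `x ≤ Y`, and integrating over `[0, Y]` gives
  `(K + 1 - u Y) * (Y - K - 1) ≤ K + 1` when `u Y ≤ K + 1`.

Taking `K` at distance about `√Y` above, respectively below, `Y` yields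
`|u Y - Y| ≤ 2 * √Y + 4`, which is more than the claim.

The series converges everywhere: if it diverged at some `x₀ > 0`, the integral in the balanced
equation would be at most `x₀` for every `s`, whereas the right-hand side is unbounded.
-/

open MeasureTheory Real Set Filter

namespace Balanced

/-! ### Power series vanishing on `[0, 1)` -/

/-- Vanishing for `s ≥ 0` only is enough: the lowest coefficient is `O(s)` as `s → 0⁺`. -/
lemma coeff_zero (e : ℕ → ℝ)
    (h : ∀ s ∈ Ico (0:ℝ) 1, HasSum (fun n => e n * s ^ n) 0) (n : ℕ) : e n = 0 := by
  induction n using Nat.strong_induction_on with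
  | _ n ih =>
    -- Divided by `s ^ n`, the series equals `e n` plus a remainder of size at most `s * C`.
    have hs : Summable (fun k => |e (k + n + 1)| * (1/2:ℝ) ^ k) := by
      have h1 := (h (1/2) (by norm_num)).summable.abs
      have h2 := (summable_nat_add_iff (n + 1)).2 h1
      have h3 := h2.mul_left ((2:ℝ) ^ (n + 1))
      refine h3.congr fun k => ?_
      rw [abs_mul, abs_of_nonneg (by positivity : (0:ℝ) ≤ (1/2) ^ (k + (n+1))), pow_add (1/2:ℝ) k,
        one_div, inv_pow 2 (n+1), ← add_assoc]
      field_simp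
    set C := ∑' k, |e (k + n + 1)| * (1/2:ℝ) ^ k with hC
    have key : ∀ s : ℝ, 0 < s → s ≤ 1/2 → |e n| ≤ s * C := by
      intro s hs0 hs1
      have h1 := h s ⟨hs0.le, by linarith⟩
      have h2 := h1.summable.sum_add_tsum_nat_add (n + 1)
      rw [h1.tsum_eq, Finset.sum_range_succ, Finset.sum_eq_zero
        (fun i hi => by rw [ih i (Finset.mem_range.1 hi), zero_mul]), zero_add] at h2
      have h3 : ∀ i, e (i + (n+1)) * s ^ (i + (n+1)) = s ^ n * (s * (e (i + n + 1) * s ^ i)) := by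
        intro i; rw [← add_assoc]; ring
      simp_rw [h3] at h2
      rw [tsum_mul_left, tsum_mul_left] at h2
      have h4 : e n = -(s * ∑' i, e (i + n + 1) * s ^ i) := by
        have : s ^ n ≠ 0 := by positivity
        have : s ^ n * (e n + s * ∑' i, e (i + n + 1) * s ^ i) = 0 := by linarith
        rcases mul_eq_zero.1 this with h | h
        · contradiction
        · linarith
      rw [h4, abs_neg, abs_mul, abs_of_pos hs0]
      refine mul_le_mul_of_nonneg_left ?_ hs0.le
      have h5 := tsum_of_norm_bounded (f := fun i => e (i + n + 1) * s ^ i) hs.hasSum (fun i => by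
        rw [norm_mul, Real.norm_eq_abs, Real.norm_eq_abs, abs_of_nonneg (by positivity : 0 ≤ s ^ i)]
        gcongr)
      rw [hC]
      exact h5
    have hC0 : 0 ≤ C := tsum_nonneg fun k => by positivity
    by_contra hne
    have hpos : 0 < |e n| := abs_pos.2 hne
    have h1 := key (min (1/2) (|e n| / (2 * (C + 1)))) (by positivity) (min_le_left _ _)
    have h2 : min (1/2) (|e n| / (2 * (C + 1))) * C ≤ |e n| / (2 * (C + 1)) * C := by
      gcongr; exact min_le_right _ _
    have h3 : |e n| / (2 * (C + 1)) * C ≤ |e n| / 2 := by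
      rw [div_mul_eq_mul_div, div_le_div_iff₀ (by positivity) (by norm_num)]
      nlinarith
    linarith

/-! ### The series, its derivative and its mean -/

lemma tail_mean_le {b : ℕ → ℝ} (hb : ∀ n, 0 ≤ b n) (h1 : Summable b)
    (h2 : Summable fun n : ℕ => n * b n) (K : ℕ) :
    (K + 1 : ℝ) * ∑' i, b (i + (K + 1))
      ≤ ∑' i : ℕ, ((i + (K + 1) : ℕ) : ℝ) * b (i + (K + 1)) := by
  have h3 : Summable fun i => b (i + (K + 1)) := (summable_nat_add_iff (K + 1)).2 h1
  have h4 : Summable fun i : ℕ => ((i + (K + 1) : ℕ) : ℝ) * b (i + (K + 1)) :=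
    (summable_nat_add_iff (f := fun n : ℕ => (n:ℝ) * b n) (K + 1)).2 h2
  rw [← tsum_mul_left]
  refine Summable.tsum_le_tsum (fun i => ?_) (h3.mul_left _) h4
  refine mul_le_mul_of_nonneg_right ?_ (hb _)
  push_cast
  have : (0:ℝ) ≤ i := Nat.cast_nonneg i
  linarith

section Series

variable {a : ℕ → ℝ} {f : ℝ → ℝ}

/-- The balanced equation forces the series to converge everywhere. -/
lemma summable_of_balanced {β : ℝ} (hβ : β ∈ Ico (0:ℝ) 1) (ha : ∀ n, 0 < a n)
    (hf : ∀ x, f x = ∑' n, a n * x ^ n)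
    (hbal : ∀ s ∈ Ico (0:ℝ) 1, (∫ x in Ioi (0:ℝ), f (s * x) / f x) = 1 / (1 - s) - β)
    (x : ℝ) : Summable fun n => a n * x ^ n := by
  have mono : ∀ x y : ℝ, 0 ≤ x → x ≤ y → Summable (fun n => a n * y ^ n) →
      Summable fun n => a n * x ^ n := by
    intro x y hx hxy hs
    refine Summable.of_nonneg_of_le (fun n => ?_) (fun n => ?_) hs
    · have := ha n; positivity
    · have := (ha n).le; gcongr
  have pos : ∀ x₀ : ℝ, 0 < x₀ → Summable fun n => a n * x₀ ^ n := by
    intro x₀ hx₀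
    by_contra hns
    have hfn : ∀ x, 0 ≤ x → 0 ≤ f x := by
      intro x hx
      rw [hf]
      exact tsum_nonneg fun n => by have := ha n; positivity
    have hle : ∀ s ∈ Ico (0:ℝ) 1, (∫ x in Ioi (0:ℝ), f (s * x) / f x) ≤ x₀ := by
      intro s hs
      have h1 : (∫ x in Ioi (0:ℝ), f (s * x) / f x)
          ≤ ∫ x in Ioi (0:ℝ), (Ioc (0:ℝ) x₀).indicator (fun _ => (1:ℝ)) x := by
        refine integral_mono_of_nonneg ?_ ?_ ?_
        · filter_upwards [self_mem_ae_restrict measurableSet_Ioi] with x hx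
          exact div_nonneg (hfn _ (mul_nonneg hs.1 (le_of_lt hx))) (hfn _ (le_of_lt hx))
        · refine Integrable.integrableOn ?_
          rw [integrable_indicator_iff measurableSet_Ioc]
          exact integrableOn_const (by simp)
        · filter_upwards [self_mem_ae_restrict measurableSet_Ioi] with x hx
          have hx : 0 < x := hx
          by_cases hsx : Summable fun n => a n * x ^ n
          · have hxx : x ≤ x₀ := by
              by_contra hcon
              exact hns (mono x₀ x hx₀.le (by linarith) hsx)
            rw [indicator_of_mem (show x ∈ Ioc (0:ℝ) x₀ from ⟨hx, hxx⟩)]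
            have hsx1 : s * x ≤ x := by nlinarith [hs.2]
            have hsx0 : 0 ≤ s * x := mul_nonneg hs.1 hx.le
            refine div_le_one_of_le₀ ?_ (hfn x hx.le)
            rw [hf, hf]
            refine Summable.tsum_le_tsum (fun n => ?_) (mono _ _ hsx0 hsx1 hsx) hsx
            have := (ha n).le
            gcongr
          · rw [hf x, tsum_eq_zero_of_not_summable hsx, div_zero]
            exact indicator_nonneg (fun _ _ => zero_le_one) _
      refine h1.trans (le_of_eq ?_)
      rw [setIntegral_indicator measurableSet_Ioc,
        inter_eq_self_of_subset_right Ioc_subset_Ioi_self]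
      simp [hx₀.le]
    have hmem : 1 - 1 / (x₀ + 2) ∈ Ico (0:ℝ) 1 := by
      have h1 : 1 / (x₀ + 2) ≤ 1 := by rw [div_le_one (by positivity)]; linarith
      have h2 : 0 < 1 / (x₀ + 2) := by positivity
      constructor <;> linarith
    have h1 := hle _ hmem
    rw [hbal _ hmem] at h1
    have h2 : 1 / (1 - (1 - 1 / (x₀ + 2))) = x₀ + 2 := by field_simp; ring
    rw [h2] at h1
    linarith [hβ.2]
  refine Summable.of_norm ?_
  refine (mono |x| (|x| + 1) (abs_nonneg x) (by linarith) (pos _ (by positivity))).congr fun n => ?_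
  rw [norm_mul, norm_pow, Real.norm_eq_abs, Real.norm_eq_abs, abs_of_pos (ha n)]

lemma summable_nat_mul (ha : ∀ n, 0 < a n) (hs : ∀ x, Summable fun n => a n * x ^ n)
    {x : ℝ} (hx : 0 ≤ x) : Summable fun n : ℕ => n * (a n * x ^ n) := by
  refine Summable.of_nonneg_of_le (fun n => ?_) (fun n => ?_) (hs (2 * x))
  · have := ha n; positivity
  · have h1 : (n:ℝ) ≤ 2 ^ n := by exact_mod_cast Nat.lt_two_pow_self.le
    have h2 : 0 ≤ a n * x ^ n := by have := ha n; positivity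
    calc (n:ℝ) * (a n * x ^ n) ≤ 2 ^ n * (a n * x ^ n) := by gcongr
      _ = a n * (2 * x) ^ n := by rw [mul_pow]; ring

lemma hasDerivAt_series (ha : ∀ n, 0 < a n) (hs : ∀ x, Summable fun n => a n * x ^ n)
    (hf : ∀ x, f x = ∑' n, a n * x ^ n) (x : ℝ) :
    HasDerivAt f (∑' n : ℕ, a n * (n * x ^ (n - 1))) x := by
  have hfe : f = fun x => ∑' n, a n * x ^ n := funext hf
  rw [hfe]
  set R := |x| + 1 with hR
  have hR1 : 1 ≤ R := by have := abs_nonneg x; linarith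
  have hmem : x ∈ Ioo (-R) R := by
    rw [mem_Ioo, ← abs_lt]; linarith
  refine hasDerivAt_tsum_of_isPreconnected (t := Ioo (-R) R)
    (summable_nat_mul ha hs (by linarith : 0 ≤ R)) isOpen_Ioo isPreconnected_Ioo
    (g := fun n y => a n * y ^ n) (g' := fun n y => a n * (n * y ^ (n - 1)))
    (fun n y _ => (hasDerivAt_pow n y).const_mul (a n)) (fun n y hy => ?_) hmem (hs x) hmem
  have hy' : |y| ≤ R := (abs_lt.2 hy).le
  have han := ha n
  rw [norm_mul, norm_mul, norm_pow, Real.norm_eq_abs, Real.norm_eq_abs, Real.norm_eq_abs,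
    abs_of_pos han, abs_of_nonneg (Nat.cast_nonneg n)]
  calc a n * (n * |y| ^ (n - 1)) ≤ a n * (n * R ^ (n - 1)) := by gcongr
    _ ≤ a n * (n * R ^ n) := by
        refine mul_le_mul_of_nonneg_left (mul_le_mul_of_nonneg_left ?_ n.cast_nonneg) han.le
        exact pow_le_pow_right₀ hR1 (Nat.sub_le n 1)
    _ = n * (a n * R ^ n) := by ring

lemma mul_deriv_series (ha : ∀ n, 0 < a n) (hs : ∀ x, Summable fun n => a n * x ^ n)
    (hf : ∀ x, f x = ∑' n, a n * x ^ n) (x : ℝ) :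
    x * deriv f x = ∑' n : ℕ, n * (a n * x ^ n) := by
  rw [(hasDerivAt_series ha hs hf x).deriv, ← tsum_mul_left]
  refine tsum_congr fun n => ?_
  rcases n with _ | n
  · simp
  · simp only [Nat.add_sub_cancel]; ring

lemma series_pos (ha : ∀ n, 0 < a n) (hs : ∀ x, Summable fun n => a n * x ^ n)
    (hf : ∀ x, f x = ∑' n, a n * x ^ n) {x : ℝ} (hx : 0 ≤ x) : 0 < f x := by
  rw [hf]
  exact (hs x).tsum_pos (fun n => by have := ha n; positivity) 0 (by simpa using ha 0)

/-- The mean `x f'(x) / f(x)` of the distribution `a n * x ^ n / f x` increases with `x`. -/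
lemma mean_mono (ha : ∀ n, 0 < a n) (hs : ∀ x, Summable fun n => a n * x ^ n)
    (hf : ∀ x, f x = ∑' n, a n * x ^ n) {x y : ℝ} (hx : 0 < x) (hxy : x ≤ y) :
    x * deriv f x / f x ≤ y * deriv f y / f y := by
  have hy : 0 < y := hx.trans_le hxy
  have hfx := series_pos ha hs hf hx.le
  have hfy := series_pos ha hs hf hy.le
  set c := x * deriv f x / f x with hc
  have hD : ∀ z : ℝ, 0 ≤ z → HasSum (fun n : ℕ => (n - c) * (a n * z ^ n))
      (z * deriv f z - c * f z) := by
    intro z hz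
    have h1 := (summable_nat_mul ha hs hz).hasSum
    rw [← mul_deriv_series ha hs hf z] at h1
    have h2 := (hs z).hasSum
    rw [← hf z] at h2
    refine (h1.sub (h2.mul_left c)).congr_fun fun n => ?_
    ring
  have hc0 : 0 ≤ c := by
    rw [hc, mul_deriv_series ha hs hf x]
    exact div_nonneg (tsum_nonneg fun n => by have := ha n; positivity) hfx.le
  set ρ := y / x with hρ
  have hρ1 : 1 ≤ ρ := by rw [hρ, one_le_div hx]; exact hxy
  have hyρ : y = x * ρ := by rw [hρ]; field_simp
  set m := ⌊c⌋₊
  -- `n - c` and `ρ ^ n - ρ ^ ⌊c⌋` always have the same sign.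
  have hterm : ∀ n : ℕ, ρ ^ m * ((n - c) * (a n * x ^ n)) ≤ (n - c) * (a n * y ^ n) := by
    intro n
    have h0 : 0 ≤ a n * x ^ n := by have := ha n; positivity
    have h1 : 0 ≤ (n - c) * (ρ ^ n - ρ ^ m) := by
      rcases le_or_gt n m with h | h
      · have h2 : (n:ℝ) ≤ c := (Nat.le_floor_iff hc0).1 h
        have h3 : ρ ^ n ≤ ρ ^ m := pow_le_pow_right₀ hρ1 h
        nlinarith
      · have h2 : c < n := (Nat.floor_lt hc0).1 h
        have h3 : ρ ^ m ≤ ρ ^ n := pow_le_pow_right₀ hρ1 h.le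
        exact mul_nonneg (by linarith) (by linarith)
    rw [hyρ, mul_pow]
    nlinarith [mul_nonneg h1 h0]
  have h1 := hasSum_le hterm ((hD x hx.le).mul_left _) (hD y hy.le)
  have h2 : x * deriv f x - c * f x = 0 := by rw [hc]; field_simp; ring
  rw [h2, mul_zero] at h1
  rw [le_div_iff₀ hfy]
  linarith

/-! ### Consequences of the balanced equation -/

/-- The masses of `a n * x ^ n / f x`, read off from the balanced equation. -/
lemma mass {β : ℝ} (hβ : β ∈ Ico (0:ℝ) 1) (ha : ∀ n, 0 < a n)
    (hs : ∀ x, Summable fun n => a n * x ^ n)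
    (hf : ∀ x, f x = ∑' n, a n * x ^ n)
    (hbal : ∀ s ∈ Ico (0:ℝ) 1, (∫ x in Ioi (0:ℝ), f (s * x) / f x) = 1 / (1 - s) - β)
    (n : ℕ) :
    IntegrableOn (fun x => a n * x ^ n / f x) (Ioi 0) ∧
      ∫ x in Ioi (0:ℝ), a n * x ^ n / f x = 1 - if n = 0 then β else 0 := by
  have hcont : Continuous f :=
    continuous_iff_continuousAt.2 fun x => (hasDerivAt_series ha hs hf x).continuousAt
  have hpos : ∀ x : ℝ, x ∈ Ioi (0:ℝ) → 0 < f x := fun x hx => series_pos ha hs hf (le_of_lt hx)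
  have hint : ∀ s ∈ Ico (0:ℝ) 1, IntegrableOn (fun x => f (s * x) / f x) (Ioi 0) := by
    intro s hs'
    by_contra hcon
    have h1 := hbal s hs'
    rw [integral_undef hcon] at h1
    have h2 : 1 ≤ 1 / (1 - s) := by
      rw [le_div_iff₀ (by linarith [hs'.2])]; linarith [hs'.1]
    linarith [hβ.2]
  have hterm : ∀ s ∈ Ico (0:ℝ) 1, ∀ x ∈ Ioi (0:ℝ),
      HasSum (fun n => s ^ n * (a n * x ^ n / f x)) (f (s * x) / f x) := by
    intro s _ x _
    have h1 := (hs (s * x)).hasSum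
    rw [← hf] at h1
    refine (h1.div_const (f x)).congr_fun fun k => ?_
    rw [mul_pow]; ring
  have hnn : ∀ n, ∀ x ∈ Ioi (0:ℝ), 0 ≤ a n * x ^ n / f x := by
    intro n x hx
    have h1 := ha n
    have h2 := hpos x hx
    have h3 : 0 < x := hx
    positivity
  have hpint : ∀ n, IntegrableOn (fun x => a n * x ^ n / f x) (Ioi 0) := by
    intro n
    have h1 : IntegrableOn (fun x => (1/2:ℝ) ^ n * (a n * x ^ n / f x)) (Ioi 0) := by
      refine Integrable.mono' (hint (1/2) (by norm_num)) ?_ ?_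
      · refine ContinuousOn.aestronglyMeasurable ?_ measurableSet_Ioi
        refine ContinuousOn.mul continuousOn_const ?_
        exact ContinuousOn.div (by fun_prop) hcont.continuousOn fun x hx => (hpos x hx).ne'
      · filter_upwards [self_mem_ae_restrict measurableSet_Ioi] with x hx
        rw [Real.norm_of_nonneg (mul_nonneg (by positivity) (hnn n x hx))]
        exact le_hasSum (hterm (1/2) (by norm_num) x hx) n fun k _ =>
          mul_nonneg (by positivity) (hnn k x hx)
    have h2 := h1.const_mul ((2:ℝ) ^ n)
    refine h2.congr (Eventually.of_forall fun x => ?_)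
    simp only [one_div, inv_pow]
    field_simp
  refine ⟨hpint n, ?_⟩
  set c : ℕ → ℝ := fun n => ∫ x in Ioi (0:ℝ), a n * x ^ n / f x with hc
  have hsum : ∀ s ∈ Ico (0:ℝ) 1, HasSum (fun n => c n * s ^ n) (1 / (1 - s) - β) := by
    intro s hs'
    have hI : ∀ n, IntegrableOn (fun x => s ^ n * (a n * x ^ n / f x)) (Ioi 0) := fun n =>
      (hpint n).const_mul _
    have hN : ∀ n, ∫ x in Ioi (0:ℝ), ‖s ^ n * (a n * x ^ n / f x)‖
        = ∫ x in Ioi (0:ℝ), s ^ n * (a n * x ^ n / f x) := by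
      intro n
      refine setIntegral_congr_fun measurableSet_Ioi fun x hx => ?_
      exact Real.norm_of_nonneg (mul_nonneg (pow_nonneg hs'.1 _) (hnn n x hx))
    have hS : Summable fun n => ∫ x in Ioi (0:ℝ), ‖s ^ n * (a n * x ^ n / f x)‖ := by
      refine summable_of_sum_le (c := ∫ x in Ioi (0:ℝ), f (s * x) / f x)
        (fun n => integral_nonneg fun x => norm_nonneg _) fun t => ?_
      simp_rw [hN]
      rw [← integral_finsetSum _ fun n _ => hI n]
      refine setIntegral_mono_on (integrable_finsetSum _ fun n _ => hI n) (hint s hs')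
        measurableSet_Ioi fun x hx => ?_
      exact sum_le_hasSum t (fun k _ => mul_nonneg (pow_nonneg hs'.1 _) (hnn k x hx))
        (hterm s hs' x hx)
    have h1 := hasSum_integral_of_summable_integral_norm hI hS
    have h2 : ∫ x in Ioi (0:ℝ), ∑' n, s ^ n * (a n * x ^ n / f x) = 1 / (1 - s) - β := by
      rw [← hbal s hs']
      exact setIntegral_congr_fun measurableSet_Ioi fun x hx => (hterm s hs' x hx).tsum_eq
    rw [h2] at h1
    refine h1.congr_fun fun k => ?_
    rw [integral_const_mul, mul_comm]
  have h0 := coeff_zero (fun n => c n - (1 - if n = 0 then β else 0)) (fun s hs' => by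
    have h1 := hasSum_geometric_of_lt_one hs'.1 hs'.2
    have h2 : HasSum (fun n : ℕ => if n = 0 then β else 0) β := hasSum_ite_eq 0 β
    have h3 := (hsum s hs').sub (h1.sub h2)
    have h4 : 1 / (1 - s) - β - ((1 - s)⁻¹ - β) = 0 := by rw [one_div]; ring
    rw [h4] at h3
    refine h3.congr_fun fun k => ?_
    rcases k with _ | k
    · simp
    · simp; ring) n
  linarith

/-! ### Integrating the two lower bounds -/

/-- The integration step: `S` is a distribution function at `K` with `-x * S' x = u x * S x - A x`,
where `u` is an increasing mean and `A` its part carried by `[0, K]`. -/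
lemma two_sided_aux {β : ℝ} (hβ : β ∈ Ico (0:ℝ) 1) {u S A : ℝ → ℝ} {K : ℝ} {Y : ℝ} (hY : 0 < Y)
    (humono : ∀ x y, 0 < x → x ≤ y → u x ≤ u y)
    (hScont : ContinuousOn S (Ici 0)) (hS0 : ∀ x, 0 ≤ x → 0 ≤ S x) (hS1 : ∀ x, 0 ≤ x → S x ≤ 1)
    (hAK : ∀ x, 0 ≤ x → A x ≤ K * S x)
    (hB : ∀ x, 0 ≤ x → (K + 1) * (1 - S x) ≤ u x - A x)
    (hSd : ∀ x, 0 < x → HasDerivAt S ((A x - u x * S x) / x) x)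
    (hIint : IntegrableOn S (Ioi 0) ∧ ∫ x in Ioi (0:ℝ), S x = K + 1 - β) :
    (K ≤ u Y → (u Y - K) * (K - Y) ≤ K + 1) ∧
      (u Y ≤ K + 1 → (K + 1 - u Y) * (Y - (K + 1)) ≤ K + 1) := by
  set I : ℝ → ℝ := fun x => ∫ t in (0:ℝ)..x, S t with hI
  have hIle : ∀ x, 0 ≤ x → I x ≤ K + 1 - β := by
    intro x hx
    rw [← hIint.2, hI]
    simp only
    rw [intervalIntegral.integral_of_le hx]
    refine setIntegral_mono_set hIint.1 ?_ (Ioc_subset_Ioi_self.eventuallyLE)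
    filter_upwards [self_mem_ae_restrict measurableSet_Ioi] with t ht using hS0 t (le_of_lt ht)
  have hII : ∀ x y, 0 ≤ x → 0 ≤ y → IntervalIntegrable S volume x y := by
    intro x y hx hy
    refine ContinuousOn.intervalIntegrable (hScont.mono ?_)
    intro t ht
    exact (le_min hx hy).trans ht.1
  have hIx : ∀ x, 0 ≤ x → I x ≤ x := by
    intro x hx
    have h1 := intervalIntegral.integral_mono_on hx (hII 0 x le_rfl hx)
      (intervalIntegrable_const (c := (1:ℝ))) fun t ht => hS1 t ht.1
    simpa using h1
  have hId : ∀ x, 0 < x → HasDerivAt I (S x) x := by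
    intro x hx
    have hc : ContinuousOn S (Ioi 0) := hScont.mono Ioi_subset_Ici_self
    exact intervalIntegral.integral_hasDerivAt_right (hII 0 x le_rfl hx.le)
      (hc.stronglyMeasurableAtFilter isOpen_Ioi x hx)
      (hc.continuousAt (Ioi_mem_nhds hx))
  have hIcont : ContinuousOn I (Ici 0) := by
    intro x hx
    have hx' : (0:ℝ) ≤ x := hx
    have h1 : ContinuousOn I (uIcc 0 (x + 1)) :=
      intervalIntegral.continuousOn_primitive_interval (by
        rw [uIcc_of_le (by linarith)]
        exact (hScont.mono Icc_subset_Ici_self).integrableOn_Icc)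
    rw [uIcc_of_le (by linarith)] at h1
    refine (h1 x ⟨hx', by linarith⟩).mono_of_mem_nhdsWithin ?_
    rw [mem_nhdsWithin]
    exact ⟨Iio (x + 1), isOpen_Iio, by simp, fun t ht => ⟨ht.2, ht.1.le⟩⟩
  have hItend : Tendsto I atTop (nhds (K + 1 - β)) := by
    rw [← hIint.2]
    exact intervalIntegral_tendsto_integral_Ioi 0 hIint.1 tendsto_id
  -- `G` is the primitive of `-x * S' x` vanishing at `0`.
  set G : ℝ → ℝ := fun x => I x - x * S x with hG
  have hGd : ∀ x, 0 < x → HasDerivAt G (u x * S x - A x) x := by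
    intro x hx
    have h1 := (hId x hx).sub ((hasDerivAt_id x).mul (hSd x hx))
    refine h1.congr_deriv ?_
    simp only [id]
    field_simp
    ring
  have hGcont : ContinuousOn G (Ici 0) := hIcont.sub (continuousOn_id.mul hScont)
  have hGle : ∀ x, 0 ≤ x → G x ≤ K + 1 := by
    intro x hx
    have h1 := mul_nonneg hx (hS0 x hx)
    have h2 := hIle x hx
    simp only [hG]
    linarith [hβ.1]
  have hI0 : I 0 = 0 := by simp [hI]
  have hG0 : G 0 = 0 := by simp [hG, hI0]
  have hF1 : ∀ x, 0 ≤ x → (K + 1 - u x) * (1 - S x) ≤ u x * S x - A x := by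
    intro x hx
    linarith [hB x hx]
  have hF2 : ∀ x, 0 ≤ x → (u x - K) * S x ≤ u x * S x - A x := by
    intro x hx
    linarith [hAK x hx]
  -- Of the two lower bounds, the one with nonnegative first factor applies.
  have hF0 : ∀ x, 0 ≤ x → 0 ≤ u x * S x - A x := by
    intro x hx
    rcases le_total (u x) K with h | h
    · refine le_trans (mul_nonneg ?_ ?_) (hF1 x hx)
      · linarith
      · linarith [hS1 x hx]
    · exact le_trans (mul_nonneg (by linarith) (hS0 x hx)) (hF2 x hx)
  have hGnn : ∀ x, 0 ≤ x → 0 ≤ G x := by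
    have hm : MonotoneOn G (Ici 0) := by
      refine monotoneOn_of_deriv_nonneg (convex_Ici 0) hGcont ?_ ?_
      · rw [interior_Ici]
        exact fun x hx => (hGd x hx).differentiableAt.differentiableWithinAt
      · rw [interior_Ici]
        intro x hx
        rw [(hGd x hx).deriv]
        exact hF0 x (le_of_lt hx)
    intro x hx
    rw [← hG0]
    exact hm self_mem_Ici hx hx
  constructor
  · intro huK
    have hm : MonotoneOn (fun x => G x - (u Y - K) * I x) (Ici Y) := by
      have hd : ∀ x, 0 < x → HasDerivAt (fun x => G x - (u Y - K) * I x)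
          (u x * S x - A x - (u Y - K) * S x) x := fun x hx =>
        (hGd x hx).sub ((hId x hx).const_mul _)
      refine monotoneOn_of_deriv_nonneg (convex_Ici Y) ?_ ?_ ?_
      · exact fun x hx => (hd x (hY.trans_le hx)).continuousAt.continuousWithinAt
      · rw [interior_Ici]
        exact fun x hx => (hd x (hY.trans hx)).differentiableAt.differentiableWithinAt
      · rw [interior_Ici]
        intro x hx
        have hx0 : 0 < x := hY.trans hx
        rw [(hd x hx0).deriv]
        have h1 := hF2 x hx0.le
        have h2 := mul_le_mul_of_nonneg_right (humono Y x hY (le_of_lt hx)) (hS0 x hx0.le)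
        linarith
    have h1 : ∀ R, Y ≤ R → (u Y - K) * (I R - I Y) ≤ K + 1 := by
      intro R hR
      have h2 := hm self_mem_Ici hR hR
      simp only at h2
      linarith [hGle R (hY.le.trans hR), hGnn Y hY.le]
    have h3 : (u Y - K) * (K + 1 - β - I Y) ≤ K + 1 :=
      le_of_tendsto ((hItend.sub_const (I Y)).const_mul (u Y - K))
        ((eventually_ge_atTop Y).mono h1)
    refine le_trans (mul_le_mul_of_nonneg_left ?_ (by linarith)) h3
    linarith [hIx Y hY.le, hβ.2]
  · intro huK
    have hm : MonotoneOn (fun x => G x - (K + 1 - u Y) * (x - I x)) (Icc 0 Y) := by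
      have hd : ∀ x, 0 < x → HasDerivAt (fun x => G x - (K + 1 - u Y) * (x - I x))
          (u x * S x - A x - (K + 1 - u Y) * (1 - S x)) x := fun x hx =>
        (hGd x hx).sub (((hasDerivAt_id x).sub (hId x hx)).const_mul _)
      refine monotoneOn_of_deriv_nonneg (convex_Icc 0 Y) ?_ ?_ ?_
      · refine ContinuousOn.mono ?_ Icc_subset_Ici_self
        exact hGcont.sub (continuousOn_const.mul (continuousOn_id.sub hIcont))
      · rw [interior_Icc]
        exact fun x hx => (hd x hx.1).differentiableAt.differentiableWithinAt
      · rw [interior_Icc]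
        intro x hx
        rw [(hd x hx.1).deriv]
        have h1 := hF1 x hx.1.le
        have h2 : 0 ≤ 1 - S x := by linarith [hS1 x hx.1.le]
        have h3 := mul_le_mul_of_nonneg_right (humono x Y hx.1 hx.2.le) h2
        linarith
    have h1 := hm ⟨le_rfl, hY.le⟩ ⟨hY.le, le_rfl⟩ hY.le
    simp only [hG0, hI0] at h1
    have h2 : (K + 1 - u Y) * (Y - I Y) ≤ K + 1 := by linarith [hGle Y hY.le]
    refine le_trans (mul_le_mul_of_nonneg_left ?_ (by linarith)) h2
    linarith [hIle Y hY.le, hβ.1]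

/-- The two-sided comparison of the mean `u Y` with integers on either side of `Y`. -/
lemma two_sided {β : ℝ} (hβ : β ∈ Ico (0:ℝ) 1) (ha : ∀ n, 0 < a n)
    (hs : ∀ x, Summable fun n => a n * x ^ n)
    (hf : ∀ x, f x = ∑' n, a n * x ^ n)
    (hbal : ∀ s ∈ Ico (0:ℝ) 1, (∫ x in Ioi (0:ℝ), f (s * x) / f x) = 1 / (1 - s) - β)
    (u : ℝ → ℝ) (hu : ∀ x, u x = x * deriv f x / f x) (K : ℕ) {Y : ℝ} (hY : 0 < Y) :
    ((K:ℝ) ≤ u Y → (u Y - K) * (K - Y) ≤ K + 1) ∧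
      (u Y ≤ K + 1 → (K + 1 - u Y) * (Y - (K + 1)) ≤ K + 1) := by
  have hfd : ∀ x, HasDerivAt f (deriv f x) x := fun x =>
    (hasDerivAt_series ha hs hf x).differentiableAt.hasDerivAt
  have hcont : Continuous f := continuous_iff_continuousAt.2 fun x => (hfd x).continuousAt
  have hpos : ∀ x : ℝ, 0 ≤ x → 0 < f x := fun x hx => series_pos ha hs hf hx
  have humono : ∀ x y, 0 < x → x ≤ y → u x ≤ u y := by
    intro x y hx hxy
    rw [hu, hu]
    exact mean_mono ha hs hf hx hxy
  -- `S` is the distribution function at `K`; `A` is the mean restricted to `n ≤ K`.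
  set S : ℝ → ℝ := fun x => (∑ n ∈ Finset.range (K + 1), a n * x ^ n) / f x with hS
  set A : ℝ → ℝ := fun x => (∑ n ∈ Finset.range (K + 1), n * (a n * x ^ n)) / f x with hA
  have hScont : ContinuousOn S (Ici 0) :=
    ContinuousOn.div (by fun_prop) hcont.continuousOn fun x hx => (hpos x hx).ne'
  have hS0 : ∀ x, 0 ≤ x → 0 ≤ S x := fun x hx =>
    div_nonneg (Finset.sum_nonneg fun n _ => by have := ha n; positivity) (hpos x hx).le
  have hS1 : ∀ x, 0 ≤ x → S x ≤ 1 := by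
    intro x hx
    refine div_le_one_of_le₀ ?_ (hpos x hx).le
    rw [hf]
    exact (hs x).sum_le_tsum _ fun n _ => by have := ha n; positivity
  have hAK : ∀ x, 0 ≤ x → A x ≤ K * S x := by
    intro x hx
    simp only [hA, hS]
    rw [← mul_div_assoc, Finset.mul_sum]
    refine div_le_div_of_nonneg_right (Finset.sum_le_sum fun n hn => ?_) (hpos x hx).le
    have h1 : (n:ℝ) ≤ K := by exact_mod_cast Nat.lt_succ_iff.1 (Finset.mem_range.1 hn)
    have h2 : 0 ≤ a n * x ^ n := by have := ha n; positivity
    gcongr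
  have hB : ∀ x, 0 ≤ x → (K + 1) * (1 - S x) ≤ u x - A x := by
    intro x hx
    have hfx := hpos x hx
    have h1 := (summable_nat_mul ha hs hx).sum_add_tsum_nat_add (K + 1)
    have h2 := (hs x).sum_add_tsum_nat_add (K + 1)
    rw [← mul_deriv_series ha hs hf x] at h1
    rw [← hf x] at h2
    have h3 := tail_mean_le (b := fun n => a n * x ^ n)
      (fun n => by have := ha n; positivity) (hs x) (summable_nat_mul ha hs hx) K
    have h5 : 1 - S x = (∑' i, a (i + (K+1)) * x ^ (i + (K+1))) / f x := by
      simp only [hS]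
      rw [eq_div_iff hfx.ne', sub_mul, div_mul_cancel₀ _ hfx.ne']
      linarith
    have h6 : u x - A x
        = (∑' i : ℕ, ((i + (K+1) : ℕ) : ℝ) * (a (i + (K+1)) * x ^ (i + (K+1)))) / f x := by
      simp only [hA]
      rw [hu, ← sub_div]
      congr 1
      linarith
    rw [h5, h6, ← mul_div_assoc]
    exact div_le_div_of_nonneg_right h3 hfx.le
  have hSd : ∀ x, 0 < x → HasDerivAt S ((A x - u x * S x) / x) x := by
    intro x hx
    have hfx := hpos x hx.le
    have h1 : HasDerivAt (fun x => ∑ n ∈ Finset.range (K + 1), a n * x ^ n)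
        (∑ n ∈ Finset.range (K + 1), a n * (n * x ^ (n - 1))) x :=
      HasDerivAt.fun_sum fun n _ => (hasDerivAt_pow n x).const_mul (a n)
    have h2 := h1.div (hfd x) hfx.ne'
    have h3 : x * ∑ n ∈ Finset.range (K + 1), a n * (n * x ^ (n - 1))
        = ∑ n ∈ Finset.range (K + 1), n * (a n * x ^ n) := by
      rw [Finset.mul_sum]
      refine Finset.sum_congr rfl fun n _ => ?_
      rcases n with _ | n
      · simp
      · simp only [Nat.add_sub_cancel]; ring
    refine h2.congr_deriv ?_
    simp only [hA, hS]
    rw [← h3, hu]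
    field_simp
  have hIint : IntegrableOn S (Ioi 0) ∧ ∫ x in Ioi (0:ℝ), S x = K + 1 - β := by
    have hm := mass hβ ha hs hf hbal
    have hSe : S = fun x => ∑ n ∈ Finset.range (K + 1), a n * x ^ n / f x := by
      funext x; simp only [hS]; rw [Finset.sum_div]
    rw [hSe]
    refine ⟨integrable_finsetSum _ fun n _ => (hm n).1, ?_⟩
    rw [integral_finsetSum _ fun n _ => (hm n).1, Finset.sum_congr rfl fun n _ => (hm n).2,
      Finset.sum_sub_distrib]
    simp
  exact two_sided_aux hβ hY humono hScont hS0 hS1 hAK hB hSd hIint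

end Series

end Balanced

theorem stmt1 (β : ℝ) (hβ : β ∈ Set.Ico (0:ℝ) 1)
    (lam : ℕ → ℝ) (f : ℝ → ℝ)
    (hf : ∀ x : ℝ, f x = ∑' i : ℕ, Real.exp (-lam i) * x ^ i)
    (hbal : ∀ s ∈ Set.Ico (0:ℝ) 1,
      (∫ x in Set.Ioi (0:ℝ), f (s * x) / f x) = 1 / (1 - s) - β)
    (u : ℝ → ℝ) (hu : ∀ x, u x = x * deriv f x / f x) :
    Filter.Tendsto (fun x => u x / x) Filter.atTop (nhds 1) := by
  have ha : ∀ n, 0 < Real.exp (-lam n) := fun n => Real.exp_pos _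
  have hs := Balanced.summable_of_balanced hβ ha hf hbal
  have key := fun (K : ℕ) {Y : ℝ} (hY : 0 < Y) =>
    Balanced.two_sided hβ ha hs hf hbal u hu K hY
  have upper : ∀ Y : ℝ, 4 ≤ Y → u Y ≤ Y + 2 * √Y + 4 := by
    intro Y hY
    have hq : 2 ≤ √Y := by rw [Real.le_sqrt' (by norm_num)]; linarith
    have hqq : √Y * √Y = Y := Real.mul_self_sqrt (by linarith)
    obtain ⟨K, hK1, hK2⟩ : ∃ K : ℕ, Y + √Y ≤ K ∧ (K:ℝ) < Y + √Y + 1 :=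
      ⟨⌈Y + √Y⌉₊, Nat.le_ceil _, Nat.ceil_lt_add_one (by positivity)⟩
    by_contra! hcon
    have h1 := (key K (by linarith : 0 < Y)).1 (by linarith)
    have h2 : (√Y + 3) * √Y ≤ (u Y - K) * (K - Y) :=
      mul_le_mul (by linarith) (by linarith) (by linarith) (by linarith)
    nlinarith
  have lower : ∀ Y : ℝ, 4 ≤ Y → Y - 2 * √Y - 4 ≤ u Y := by
    intro Y hY
    have hq : 2 ≤ √Y := by rw [Real.le_sqrt' (by norm_num)]; linarith
    have hqq : √Y * √Y = Y := Real.mul_self_sqrt (by linarith)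
    have hge : 1 ≤ Y - √Y := by nlinarith
    obtain ⟨K, hK1, hK2⟩ : ∃ K : ℕ, (K:ℝ) + 1 ≤ Y - √Y ∧ Y - √Y < (K:ℝ) + 1 + 1 := by
      refine ⟨⌊Y - √Y⌋₊ - 1, ?_⟩
      have h1 : 1 ≤ ⌊Y - √Y⌋₊ := Nat.le_floor (by simpa using hge)
      have h2 := Nat.floor_le (by linarith : 0 ≤ Y - √Y)
      have h3 := Nat.lt_floor_add_one (Y - √Y)
      push_cast [Nat.cast_sub h1]
      constructor <;> linarith
    by_contra! hcon
    have h1 := (key K (by linarith : 0 < Y)).2 (by linarith)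
    have h2 : (√Y + 3) * √Y ≤ (K + 1 - u Y) * (Y - (K + 1)) :=
      mul_le_mul (by linarith) (by linarith) (by linarith) (by linarith)
    nlinarith
  have herr : Tendsto (fun Y : ℝ => 2 / √Y + 4 / Y) atTop (nhds 0) := by
    have h1 : Tendsto (fun Y : ℝ => 2 / √Y) atTop (nhds 0) :=
      Real.tendsto_sqrt_atTop.const_div_atTop 2
    have h2 : Tendsto (fun Y : ℝ => 4 / Y) atTop (nhds 0) := tendsto_id.const_div_atTop 4
    simpa using h1.add h2
  have hL : Tendsto (fun Y : ℝ => 1 - (2 / √Y + 4 / Y)) atTop (nhds 1) := by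
    simpa using herr.const_sub 1
  have hU : Tendsto (fun Y : ℝ => 1 + (2 / √Y + 4 / Y)) atTop (nhds 1) := by
    simpa using herr.const_add 1
  have hscale : ∀ Y : ℝ, 4 ≤ Y → (2 / √Y + 4 / Y) * Y = 2 * √Y + 4 := by
    intro Y hY
    have hq : 0 < √Y := Real.sqrt_pos.2 (by linarith)
    have hqq : √Y * √Y = Y := Real.mul_self_sqrt (by linarith)
    have hY0 : Y ≠ 0 := by linarith
    rw [add_mul, div_mul_cancel₀ _ hY0, div_mul_eq_mul_div, add_left_inj, div_eq_iff hq.ne']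
    linear_combination -2 * hqq
  refine tendsto_of_tendsto_of_tendsto_of_le_of_le' hL hU ?_ ?_
  · filter_upwards [eventually_ge_atTop (4:ℝ)] with Y hY
    rw [le_div_iff₀ (by linarith)]
    linarith [lower Y hY, hscale Y hY]
  · filter_upwards [eventually_ge_atTop (4:ℝ)] with Y hY
    rw [div_le_iff₀ (by linarith)]
    linarith [upper Y hY, hscale Y hY]
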